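/- arXiv:1707.00324 — 2 statements merged into one kernel-verified Lean document; each statement's English description precedes it below -/
import Mathlib

section
/- Let n and k be positive integers with k ≤ n/2. Then there exists a finite set X of vectors in ℝ^n such that: (1) every x ∈ X has at most k nonzero entries and satisfies ‖x‖_2 ≤ √k; (2) for all distinct x, y ∈ X, ‖x − y‖_2 ≥ √(k/2); and (3) |X| ≥ (n/k)^{k/2}, i.e., ln|X| ≥ (k/2) ln(n/k). -/
open Finset

namespace SparsePacking

/-- Hamming balls over a three letter alphabet. -/
lemma ball_card (n m : ℕ) (hm : m ≤ n) (x : Fin n → SignType) :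
    #{y : Fin n → SignType | hammingDist x y ≤ m} ≤ n.choose m * 3 ^ m := by
  classical
  have hsub : ({y : Fin n → SignType | hammingDist x y ≤ m} : Finset _) ⊆
      (powersetCard m (univ : Finset (Fin n))).biUnion
        (fun S => Fintype.piFinset (fun i => if i ∈ S then univ else {x i})) := by
    intro y hy
    simp only [mem_filter, mem_univ, true_and] at hy
    obtain ⟨S, hS, hSc⟩ := exists_superset_card_eq
      (s := ({i | x i ≠ y i} : Finset (Fin n))) (n := m) hy (by simpa using hm)
    simp only [mem_biUnion, mem_powersetCard, subset_univ, true_and, Fintype.mem_piFinset]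
    refine ⟨S, hSc, fun i => ?_⟩
    by_cases hi : i ∈ S
    · simp [hi]
    · simp only [hi, if_false, mem_singleton]
      by_contra hne
      exact hi (hS (by simpa using fun h => hne h.symm))
  refine (card_le_card hsub).trans ?_
  refine (card_biUnion_le_card_mul _ _ (3 ^ m) ?_).trans ?_
  · intro S hS
    rw [mem_powersetCard] at hS
    rw [Fintype.card_piFinset]
    have : ∀ i, #(if i ∈ S then (univ : Finset SignType) else {x i}) = if i ∈ S then 3 else 1 := by
      intro i
      split_ifs
      · rfl
      · simp
    simp only [this]
    rw [prod_ite]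
    simp [hS.2]
  · simp

lemma sphere_card (n k : ℕ) :
    n.choose k * 2 ^ k ≤ #{y : Fin n → SignType | #{i | y i ≠ 0} = k} := by
  classical
  let P : Finset (Fin n) → Finset (Fin n → SignType) :=
    fun S => Fintype.piFinset (fun i => if i ∈ S then {1, -1} else {0})
  have hP : ∀ S, ∀ y ∈ P S, ({i | y i ≠ 0} : Finset (Fin n)) = S := by
    intro S y hy
    ext i
    have := Fintype.mem_piFinset.1 hy i
    by_cases hi : i ∈ S
    · simp only [hi, if_true, mem_insert, mem_singleton] at this
      rcases this with h | h <;> simp [hi, h]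
    · simpa [hi] using this
  have hsub : (powersetCard k (univ : Finset (Fin n))).biUnion P ⊆
      ({y : Fin n → SignType | #{i | y i ≠ 0} = k} : Finset _) := by
    intro y hy
    obtain ⟨S, hS, hy⟩ := mem_biUnion.1 hy
    rw [mem_filter]
    refine ⟨mem_univ _, ?_⟩
    rw [hP S y hy]
    exact (mem_powersetCard.1 hS).2
  refine le_trans (le_of_eq ?_) (card_le_card hsub)
  rw [card_biUnion]
  · have : ∀ S ∈ powersetCard k (univ : Finset (Fin n)), #(P S) = 2 ^ k := by
      intro S hS
      rw [mem_powersetCard] at hS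
      rw [Fintype.card_piFinset]
      have : ∀ i, #(if i ∈ S then ({1, -1} : Finset SignType) else {0})
          = if i ∈ S then 2 else 1 := by
        intro i
        split_ifs <;> rfl
      simp only [this]
      rw [prod_ite]
      simp [hS.2]
    rw [sum_congr rfl this]
    simp
  · intro S _ T _ hST
    rw [Function.onFun, disjoint_left]
    intro y h1 h2
    exact hST ((hP S y h1).symm.trans (hP T y h2))

/-- Greedy packing. -/
lemma greedy {α : Type*} [Fintype α] [DecidableEq α] (d : α → α → ℕ)
    (hd : ∀ x y, d x y = d y x) (h0 : ∀ x, d x x = 0) (m B : ℕ)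
    (hB : ∀ x, #{y | d x y ≤ m} ≤ B) (U : Finset α) :
    ∃ X ⊆ U, (∀ x ∈ X, ∀ y ∈ X, x ≠ y → m < d x y) ∧ #U ≤ #X * B := by
  classical
  obtain ⟨X, hX, hmax⟩ := exists_max_image
    (U.powerset.filter (fun X => ∀ x ∈ X, ∀ y ∈ X, x ≠ y → m < d x y)) card
    ⟨∅, by simp⟩
  rw [mem_filter, mem_powerset] at hX
  refine ⟨X, hX.1, hX.2, ?_⟩
  have hsub : U ⊆ X.biUnion (fun x => ({y | d x y ≤ m} : Finset α)) := by
    intro u hu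
    by_contra hc
    simp only [mem_biUnion, mem_filter, mem_univ, true_and, not_exists, not_and, not_le] at hc
    have hux : u ∉ X := fun h => by
      have := hc u h
      rw [h0] at this
      omega
    have := hmax (insert u X) (by
      rw [mem_filter, mem_powerset]
      refine ⟨insert_subset hu hX.1, ?_⟩
      intro x hx y hy hxy
      rw [mem_insert] at hx hy
      rcases hx with rfl | hx <;> rcases hy with rfl | hy
      · exact absurd rfl hxy
      · rw [hd]; exact hc y hy
      · exact hc x hx
      · exact hX.2 x hx y hy hxy)
    rw [card_insert_of_notMem hux] at this
    omega
  exact (card_le_card hsub).trans (card_biUnion_le_card_mul _ _ _ (fun x _ => hB x))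

lemma desc_ratio (a b : ℕ) (hab : b ≤ a) (r : ℕ) :
    b.descFactorial r * a ^ r ≤ a.descFactorial r * b ^ r := by
  induction r with
  | zero => simp
  | succ r ih =>
    rw [Nat.descFactorial_succ, Nat.descFactorial_succ, pow_succ, pow_succ]
    have h : (b - r) * a ≤ (a - r) * b := by
      rw [Nat.sub_mul, Nat.sub_mul, mul_comm b a]
      exact Nat.sub_le_sub_left (Nat.mul_le_mul_left r hab) _
    calc _ = ((b - r) * a) * (b.descFactorial r * a ^ r) := by ring
      _ ≤ ((a - r) * b) * (a.descFactorial r * b ^ r) := Nat.mul_le_mul h ih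
      _ = _ := by ring

lemma choose_ratio (a b : ℕ) (hab : b ≤ a) (r : ℕ) :
    b.choose r * a ^ r ≤ a.choose r * b ^ r := by
  have h := desc_ratio a b hab r
  rw [Nat.descFactorial_eq_factorial_mul_choose, Nat.descFactorial_eq_factorial_mul_choose,
    mul_assoc, mul_assoc] at h
  exact Nat.le_of_mul_le_mul_left h (Nat.factorial_pos r)

lemma count (n k m N : ℕ) (hkn : 2 * k ≤ n) (hm : m ≤ k)
    (h : n.choose k * 2 ^ k ≤ N * (n.choose m * 3 ^ m)) :
    2 ^ k * (n - m) ^ (k - m) ≤ N * 3 ^ m * k ^ (k - m) := by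
  have h1 : n.choose k * k.choose m = n.choose m * (n - m).choose (k - m) :=
    Nat.choose_mul hm
  have h2 := choose_ratio (n - m) k (by omega) (k - m)
  rw [Nat.choose_symm hm] at h2
  have p1 : 0 < n.choose m := Nat.choose_pos (by omega)
  have p2 : 0 < k.choose m := Nat.choose_pos hm
  refine Nat.le_of_mul_le_mul_left ?_ (Nat.mul_pos p1 p2)
  calc n.choose m * k.choose m * (2 ^ k * (n - m) ^ (k - m))
      = n.choose m * 2 ^ k * (k.choose m * (n - m) ^ (k - m)) := by ring
    _ ≤ n.choose m * 2 ^ k * ((n - m).choose (k - m) * k ^ (k - m)) := Nat.mul_le_mul_left _ h2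
    _ = (n.choose m * (n - m).choose (k - m)) * 2 ^ k * k ^ (k - m) := by ring
    _ = (n.choose k * 2 ^ k) * (k.choose m * k ^ (k - m)) := by rw [← h1]; ring
    _ ≤ (N * (n.choose m * 3 ^ m)) * (k.choose m * k ^ (k - m)) := Nat.mul_le_mul_right _ h
    _ = _ := by ring

lemma final (n k N : ℕ) (hk : 0 < k) (hkn : 2 * k ≤ n)
    (h : 2 ^ k * (n - k / 2) ^ (k - k / 2) ≤ N * 3 ^ (k / 2) * k ^ (k - k / 2)) :
    ((n : ℝ) / k) ^ ((k : ℝ) / 2) ≤ (N : ℝ) := by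
  set m := k / 2 with hm
  have hk' : (0 : ℝ) < k := by exact_mod_cast hk
  have hkn' : (2 : ℝ) * k ≤ n := by exact_mod_cast hkn
  have hm' : (m : ℝ) ≤ k / 2 := by
    have : 2 * m ≤ k := by omega
    have : (2 : ℝ) * m ≤ k := by exact_mod_cast this
    linarith
  set t : ℝ := n / k with ht
  have ht2 : 2 ≤ t := by rw [ht, le_div_iff₀ hk']; exact hkn'
  have hR : (2 : ℝ) ^ k * ((n : ℝ) - m) ^ (k - m) ≤ N * 3 ^ m * (k : ℝ) ^ (k - m) := by
    have h' : ((2 ^ k * (n - m) ^ (k - m) : ℕ) : ℝ) ≤ ((N * 3 ^ m * k ^ (k - m) : ℕ) : ℝ) := by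
      exact_mod_cast h
    push_cast [Nat.cast_sub (show m ≤ n by omega)] at h'
    exact h'
  have h1 : (2 : ℝ) ^ k * (3 / 4 * t) ^ (k - m) ≤ N * 3 ^ m := by
    have e : (3 / 4 * t) ^ (k - m) * (k : ℝ) ^ (k - m) = (3 / 4 * n) ^ (k - m) := by
      rw [← mul_pow, ht]; congr 1; field_simp
    refine le_of_mul_le_mul_right ?_ (show (0 : ℝ) < (k : ℝ) ^ (k - m) by positivity)
    rw [mul_assoc, e]
    refine le_trans ?_ hR
    gcongr
    linarith
  have e2 : (2 : ℝ) ^ k = 4 ^ ((k : ℝ) / 2) := by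
    rw [show (4 : ℝ) = 2 ^ (2 : ℝ) by norm_num, ← Real.rpow_mul (by norm_num),
      show (2 : ℝ) * ((k : ℝ) / 2) = k by ring, Real.rpow_natCast]
  have e3 : (3 : ℝ) ^ m ≤ 3 ^ ((k : ℝ) / 2) := by
    rw [← Real.rpow_natCast]
    exact Real.rpow_le_rpow_of_exponent_le (by norm_num) hm'
  have e4 : (3 / 4 * t) ^ ((k : ℝ) / 2) ≤ (3 / 4 * t) ^ (k - m) := by
    rw [← Real.rpow_natCast]
    apply Real.rpow_le_rpow_of_exponent_le (by linarith)
    rw [Nat.cast_sub (by omega)]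
    linarith
  have e5 : (4 : ℝ) ^ ((k : ℝ) / 2) * (3 / 4 * t) ^ ((k : ℝ) / 2)
      = t ^ ((k : ℝ) / 2) * 3 ^ ((k : ℝ) / 2) := by
    rw [← Real.mul_rpow (by norm_num) (by linarith), ← Real.mul_rpow (by linarith) (by norm_num)]
    congr 1; ring
  refine le_of_mul_le_mul_right ?_ (show (0 : ℝ) < 3 ^ ((k : ℝ) / 2) by positivity)
  rw [← e5, ← e2]
  calc (2 : ℝ) ^ k * (3 / 4 * t) ^ ((k : ℝ) / 2) ≤ 2 ^ k * (3 / 4 * t) ^ (k - m) := by gcongr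
    _ ≤ N * 3 ^ m := h1
    _ ≤ _ := by gcongr

/-- Real vector of a sign pattern. -/
noncomputable def vec {n : ℕ} (x : Fin n → SignType) : EuclideanSpace ℝ (Fin n) :=
  WithLp.toLp 2 (fun i => ((x i : SignType) : ℝ))

lemma sgn_inj (a b : SignType) (h : (a : ℝ) = (b : ℝ)) : a = b := by
  cases a <;> cases b <;> simp_all <;> norm_num at h

lemma vec_inj {n : ℕ} : Function.Injective (vec (n := n)) := by
  intro x y h
  funext i
  exact sgn_inj _ _ (congrArg (fun v : EuclideanSpace ℝ (Fin n) => v i) h)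

lemma vec_dist {n : ℕ} (x y : Fin n → SignType) :
    (hammingDist x y : ℝ) ≤ ‖vec x - vec y‖ ^ 2 := by
  rw [EuclideanSpace.norm_sq_eq, hammingDist, card_filter]
  push_cast
  apply sum_le_sum
  intro i _
  simp only [vec, PiLp.sub_apply, Real.norm_eq_abs, sq_abs]
  cases x i <;> cases y i <;> simp <;> norm_num

lemma vec_norm {n : ℕ} (x : Fin n → SignType) :
    ‖vec x‖ ^ 2 = (#{i | x i ≠ 0} : ℝ) := by
  rw [EuclideanSpace.norm_sq_eq, card_filter]
  push_cast
  apply sum_congr rfl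
  intro i _
  simp only [vec, Real.norm_eq_abs, sq_abs]
  cases x i <;> simp

end SparsePacking

/-- Packing set of sparse vectors: there is a finite set `X` of `k`-sparse vectors in `ℝⁿ`
of Euclidean norm at most `√k`, pairwise at Euclidean distance at least `√(k/2)`,
with `|X| ≥ (n/k)^{k/2}`. -/
theorem sparse_vector_packing (n k : ℕ) (hn : 0 < n) (hk : 0 < k) (hkn : 2 * k ≤ n) :
    ∃ X : Finset (EuclideanSpace ℝ (Fin n)),
      (∀ x ∈ X, Set.ncard {i | x i ≠ 0} ≤ k ∧ ‖x‖ ≤ Real.sqrt k) ∧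
      (∀ x ∈ X, ∀ y ∈ X, x ≠ y → Real.sqrt ((k : ℝ) / 2) ≤ ‖x - y‖) ∧
      ((n : ℝ) / k) ^ ((k : ℝ) / 2) ≤ (X.card : ℝ) := by
  classical
  obtain ⟨X, hXU, hX, hc⟩ := SparsePacking.greedy (α := Fin n → SignType) hammingDist
    hammingDist_comm hammingDist_self (k / 2) (n.choose (k / 2) * 3 ^ (k / 2))
    (SparsePacking.ball_card n (k / 2) (by omega))
    ({y : Fin n → SignType | #{i | y i ≠ 0} = k} : Finset _)
  refine ⟨X.map ⟨SparsePacking.vec, SparsePacking.vec_inj⟩, ?_, ?_, ?_⟩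
  · intro v hv
    obtain ⟨x, hx, rfl⟩ := mem_map.1 hv
    have hxk := (mem_filter.1 (hXU hx)).2
    constructor
    · have : {i | (SparsePacking.vec x) i ≠ 0} = (({i | x i ≠ 0} : Finset (Fin n)) : Set (Fin n)) := by
        ext i
        simp only [Set.mem_setOf_eq, coe_filter, mem_univ, true_and, SparsePacking.vec]
        cases x i <;> simp
      simp only [Function.Embedding.coeFn_mk]
      rw [this, Set.ncard_coe_finset, hxk]
    · apply Real.le_sqrt_of_sq_le
      simp only [Function.Embedding.coeFn_mk]
      rw [SparsePacking.vec_norm, hxk]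
  · intro v hv w hw hvw
    obtain ⟨x, hx, rfl⟩ := mem_map.1 hv
    obtain ⟨y, hy, rfl⟩ := mem_map.1 hw
    have h1 := hX x hx y hy (fun h => hvw (by rw [h]))
    apply Real.sqrt_le_iff.2
    refine ⟨norm_nonneg _, le_trans ?_ (SparsePacking.vec_dist x y)⟩
    have h2 : k ≤ 2 * hammingDist x y := by omega
    have h3 : (k : ℝ) ≤ 2 * (hammingDist x y : ℝ) := by exact_mod_cast h2
    linarith
  · rw [card_map]
    exact SparsePacking.final n k _ hk hkn (SparsePacking.count n k (k / 2) _ hkn (by omega)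
      ((SparsePacking.sphere_card n k).trans hc))
end

section
/- Let n and k be positive integers with k ≤ n/2, let δ ∈ (0, 1/2], and let A be an m×n real matrix satisfying the Restricted Isometry Property of order 2k with constant δ. Then m ≥ k · ln(n/k) / (2 ln(√(16(1+δ)/(1−δ)) + 1)). -/
open Finset

/-- The Euclidean (`ℓ₂`) norm of a vector in `ℝ^d`. -/
noncomputable def l2norm {d : ℕ} (v : Fin d → ℝ) : ℝ := Real.sqrt (∑ i, v i ^ 2)

/-- Volume packing bound. -/
lemma packing_bound {ι : Type*} {m : ℕ} (s : Finset ι) (p : ι → EuclideanSpace ℝ (Fin m))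
    (ρ η : ℝ) (hρ : 0 ≤ ρ) (hη : 0 < η) (hs : ∀ i ∈ s, ‖p i‖ ≤ ρ)
    (h : ∀ i ∈ s, ∀ j ∈ s, i ≠ j → η ≤ ‖p i - p j‖) :
    (s.card : ℝ) ≤ (1 + 2 * (ρ / η)) ^ m := by
  classical
  let E := EuclideanSpace ℝ (Fin m)
  let μ : MeasureTheory.Measure E := MeasureTheory.Measure.addHaar
  have hfr : Module.finrank ℝ E = m := by simp [E]
  have hr : 0 < η / 2 := by positivity
  have hR : 0 < ρ + η / 2 := by positivity
  have D : Set.Pairwise (s : Set ι) (Function.onFun Disjoint fun i => Metric.ball (p i) (η / 2)) := by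
    intro c hc d hd hcd
    apply Metric.ball_disjoint_ball
    rw [dist_eq_norm]
    have := h c hc d hd hcd
    linarith
  have hsub : (⋃ i ∈ s, Metric.ball (p i) (η / 2)) ⊆ Metric.ball (0 : E) (ρ + η / 2) := by
    refine Set.iUnion₂_subset fun x hx => ?_
    apply Metric.ball_subset_ball'
    rw [dist_zero_right]
    have := hs x hx
    linarith
  have I : (s.card : ENNReal) * ENNReal.ofReal ((η / 2) ^ m) * μ (Metric.ball 0 1) ≤
      ENNReal.ofReal ((ρ + η / 2) ^ m) * μ (Metric.ball 0 1) :=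
    calc
      (s.card : ENNReal) * ENNReal.ofReal ((η / 2) ^ m) * μ (Metric.ball 0 1)
          = μ (⋃ i ∈ s, Metric.ball (p i) (η / 2)) := by
        rw [MeasureTheory.measure_biUnion_finset D fun c _ => measurableSet_ball]
        simp only [μ.addHaar_ball_of_pos _ hr, hfr]
        simp only [Finset.sum_const, nsmul_eq_mul, mul_assoc]
      _ ≤ μ (Metric.ball (0 : E) (ρ + η / 2)) := MeasureTheory.measure_mono hsub
      _ = ENNReal.ofReal ((ρ + η / 2) ^ m) * μ (Metric.ball 0 1) := by
        simp only [μ.addHaar_ball_of_pos _ hR, hfr]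
  have J : (s.card : ENNReal) * ENNReal.ofReal ((η / 2) ^ m) ≤ ENNReal.ofReal ((ρ + η / 2) ^ m) :=
    (ENNReal.mul_le_mul_iff_left (Metric.measure_ball_pos _ _ zero_lt_one).ne'
      MeasureTheory.measure_ball_lt_top.ne).1 I
  have K := ENNReal.toReal_le_of_le_ofReal (pow_nonneg hR.le _) J
  rw [ENNReal.toReal_mul, ENNReal.toReal_natCast, ENNReal.toReal_ofReal (by positivity)] at K
  have e : (1 + 2 * (ρ / η)) = (ρ + η / 2) / (η / 2) := by field_simp; ring
  rw [e, div_pow, le_div_iff₀ (by positivity)]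
  exact K

/-- Size of a Hamming ball. -/
lemma hamming_ball_card (k q t : ℕ) (hq : 0 < q) (c : Fin k → Fin q) :
    (univ.filter fun w : Fin k → Fin q => hammingDist c w ≤ t).card ≤ 2 ^ k * q ^ t := by
  classical
  let F : Finset (Fin k) → Finset (Fin k → Fin q) := fun S =>
    Fintype.piFinset fun i => if i ∈ S then univ else {c i}
  have hF : ∀ S : Finset (Fin k), (F S).card = q ^ S.card := by
    intro S
    simp only [F, Fintype.card_piFinset, apply_ite Finset.card, Finset.card_univ,
      Fintype.card_fin, Finset.card_singleton]
    rw [Finset.prod_ite]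
    simp
  have hsub : (univ.filter fun w : Fin k → Fin q => hammingDist c w ≤ t) ⊆
      ((univ : Finset (Finset (Fin k))).filter fun S => S.card ≤ t).biUnion F := by
    intro w hw
    simp only [mem_filter, mem_univ, true_and] at hw
    rw [mem_biUnion]
    refine ⟨univ.filter fun i => c i ≠ w i, by simpa [hammingDist] using hw, ?_⟩
    simp only [F, Fintype.mem_piFinset]
    intro i
    by_cases h : c i = w i <;> simp [h]
  calc _ ≤ _ := card_le_card hsub
    _ ≤ ((univ : Finset (Finset (Fin k))).filter fun S => S.card ≤ t).card * q ^ t := by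
        apply card_biUnion_le_card_mul
        intro S hS
        rw [hF]
        exact Nat.pow_le_pow_right hq (by simpa using hS)
    _ ≤ _ := by
        gcongr
        refine (card_filter_le _ _).trans ?_
        simp

/-- Gilbert--Varshamov. -/
lemma gilbert (k q t : ℕ) (hq : 0 < q) :
    ∃ C : Finset (Fin k → Fin q), (∀ c ∈ C, ∀ d ∈ C, c ≠ d → t < hammingDist c d) ∧
      q ^ k ≤ C.card * (2 ^ k * q ^ t) := by
  classical
  let P : Finset (Finset (Fin k → Fin q)) :=
    univ.filter fun C => ∀ c ∈ C, ∀ d ∈ C, c ≠ d → t < hammingDist c d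
  have hP : P.Nonempty := ⟨∅, by simp [P]⟩
  obtain ⟨C, hC, hmax⟩ := P.exists_max_image Finset.card hP
  have hC' : ∀ c ∈ C, ∀ d ∈ C, c ≠ d → t < hammingDist c d := by simpa [P] using hC
  refine ⟨C, hC', ?_⟩
  have hcov : (univ : Finset (Fin k → Fin q)) ⊆
      C.biUnion fun c => univ.filter fun w => hammingDist c w ≤ t := by
    intro w _
    simp only [mem_biUnion, mem_filter, mem_univ, true_and]
    by_contra hno
    push Not at hno
    have hw : w ∉ C := fun hw => by
      have := hno w hw
      simp at this
    have h2 : insert w C ∈ P := by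
      simp only [P, mem_filter, mem_univ, true_and, mem_insert]
      rintro c (rfl | hc) d (rfl | hd) hcd
      · exact absurd rfl hcd
      · rw [hammingDist_comm]; exact hno d hd
      · exact hno c hc
      · exact hC' c hc d hd hcd
    have := hmax _ h2
    rw [card_insert_of_notMem hw] at this
    omega
  have h1 := card_le_card hcov
  have h2 : (univ : Finset (Fin k → Fin q)).card = q ^ k := by simp
  rw [h2] at h1
  refine h1.trans (card_biUnion_le_card_mul _ _ _ fun c _ => hamming_ball_card k q t hq c)

lemma l2norm_sq {d : ℕ} (v : Fin d → ℝ) : l2norm v ^ 2 = ∑ i, v i ^ 2 :=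
  Real.sq_sqrt (Finset.sum_nonneg fun _ _ => sq_nonneg _)

lemma l2norm_eq {d : ℕ} (v : Fin d → ℝ) : l2norm v = ‖WithLp.toLp 2 v‖ := by
  rw [l2norm, EuclideanSpace.norm_eq]; simp

/-- RIP of order `2k` forces `m ≥ 2k`. -/
lemma two_k_le (n k m : ℕ) (hkn : 2 * k ≤ n) (A : Matrix (Fin m) (Fin n) ℝ) (c : ℝ) (hc : 0 < c)
    (h : ∀ z : Fin n → ℝ, Set.ncard {i | z i ≠ 0} ≤ 2 * k →
      c * l2norm z ^ 2 ≤ l2norm (A.mulVec z) ^ 2) : 2 * k ≤ m := by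
  classical
  let e : Fin (2 * k) → Fin n := Fin.castLE hkn
  have he : Function.Injective e := Fin.castLE_injective hkn
  let X : (Fin (2 * k) → ℝ) →ₗ[ℝ] (Fin n → ℝ) := Function.ExtendByZero.linearMap ℝ e
  have hX : ∀ v, X v = Function.extend e v 0 := fun v => rfl
  have hinj : Function.Injective (A.mulVecLin.comp X) := by
    rw [injective_iff_map_eq_zero]
    intro v hv
    have hv' : A.mulVec (X v) = 0 := hv
    have hsupp : Set.ncard {i | X v i ≠ 0} ≤ 2 * k := by
      have hs : {i | X v i ≠ 0} ⊆ Set.range e := by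
        intro i hi
        by_contra hno
        apply hi
        rw [hX, Function.extend_apply' _ _ _ hno]
        rfl
      refine (Set.ncard_le_ncard hs (Set.toFinite _)).trans ?_
      rw [← Set.image_univ, Set.ncard_image_of_injective _ he, Set.ncard_univ]
      simp
    have h1 := h _ hsupp
    rw [hv', l2norm_sq, l2norm_sq] at h1
    simp only [Pi.zero_apply, ne_eq, OfNat.ofNat_ne_zero, not_false_eq_true, zero_pow,
      Finset.sum_const_zero] at h1
    have h2 : ∑ i, X v i ^ 2 ≤ 0 := by
      by_contra hh
      push Not at hh
      have := mul_pos hc hh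
      linarith
    have h3 : ∑ i, X v i ^ 2 = 0 := le_antisymm h2 (Finset.sum_nonneg fun _ _ => sq_nonneg _)
    rw [Finset.sum_eq_zero_iff_of_nonneg (fun _ _ => sq_nonneg _)] at h3
    ext j
    have h4 := h3 (e j) (mem_univ _)
    rw [hX, he.extend_apply] at h4
    simpa using h4
  have := LinearMap.finrank_le_finrank_of_injective hinj
  simpa using this

/-- Block-sparse indicator vectors. -/
noncomputable def wordVec {k q n : ℕ} (e : Fin k × Fin q → Fin n) (f : Fin k → Fin q) :
    Fin n → ℝ := Function.extend e (fun p => if f p.1 = p.2 then 1 else 0) 0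

lemma wordVec_supp {k q n : ℕ} (e : Fin k × Fin q → Fin n) (he : Function.Injective e)
    (f : Fin k → Fin q) (j : Fin n) (h : wordVec e f j ≠ 0) :
    j ∈ univ.image fun i => e (i, f i) := by
  by_cases hj : ∃ p, e p = j
  · obtain ⟨⟨i, a⟩, rfl⟩ := hj
    rw [wordVec, he.extend_apply] at h
    have : f i = a := by by_contra hne; simp [hne] at h
    subst this
    simp
  · rw [wordVec, Function.extend_apply' _ _ _ hj] at h
    simp at h

lemma sum_via {k q n : ℕ} (e : Fin k × Fin q → Fin n) (he : Function.Injective e)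
    (z : Fin n → ℝ) (hz : ∀ j, (¬ ∃ p, e p = j) → z j = 0) :
    ∑ j, z j ^ 2 = ∑ i, ∑ a, z (e (i, a)) ^ 2 := by
  classical
  rw [← Fintype.sum_prod_type' (fun i a => z (e (i, a)) ^ 2)]
  symm
  refine Fintype.sum_of_injective e he _ _ (fun j hj => ?_) (fun p => rfl)
  rw [hz j hj]
  norm_num

lemma wordVec_sq {k q n : ℕ} (e : Fin k × Fin q → Fin n) (he : Function.Injective e)
    (f : Fin k → Fin q) : l2norm (wordVec e f) ^ 2 = k := by
  rw [l2norm_sq, sum_via e he]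
  · simp [wordVec, he.extend_apply]
  · intro j hj
    rw [wordVec, Function.extend_apply' _ _ _ hj]; rfl

lemma wordVec_sub_sq {k q n : ℕ} (e : Fin k × Fin q → Fin n) (he : Function.Injective e)
    (f g : Fin k → Fin q) :
    l2norm (wordVec e f - wordVec e g) ^ 2 = 2 * hammingDist f g := by
  rw [l2norm_sq, sum_via e he]
  · have : ∀ i, ∑ a, (wordVec e f - wordVec e g) (e (i, a)) ^ 2 =
        if f i ≠ g i then (2 : ℝ) else 0 := by
      intro i
      have h1 : ∀ a, (wordVec e f - wordVec e g) (e (i, a)) ^ 2 =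
        (if f i = a then (1 : ℝ) else 0) + (if g i = a then 1 else 0)
          - 2 * (if f i = a then (if g i = a then 1 else 0) else 0) := by
        intro a
        simp only [Pi.sub_apply, wordVec, he.extend_apply]
        split_ifs <;> norm_num
      simp only [h1, Finset.sum_sub_distrib, Finset.sum_add_distrib, ← Finset.mul_sum]
      by_cases h : f i = g i
      · simp [h]; norm_num
      · have h' : ¬ g i = f i := fun hh => h hh.symm
        simp [h, h']; norm_num
    simp only [this]
    rw [← Finset.sum_filter]
    simp [hammingDist, mul_comm]
  · intro j hj
    simp [wordVec, Function.extend_apply' _ _ _ hj]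

/-- Single-block measurement lower bound: if `A` satisfies the RIP of order `2k` with
constant `δ ∈ (0, 1/2]` and `k ≤ n/2`, then
`m ≥ k ln(n/k) / (2 ln(√(16(1+δ)/(1-δ)) + 1))`. -/
theorem measurement_lower_bound (n k : ℕ) (hn : 0 < n) (hk : 0 < k) (hkn : 2 * k ≤ n)
    (δ : ℝ) (hδ : δ ∈ Set.Ioc (0 : ℝ) (1 / 2))
    (m : ℕ) (A : Matrix (Fin m) (Fin n) ℝ)
    (hRIP : ∀ z : Fin n → ℝ, Set.ncard {i | z i ≠ 0} ≤ 2 * k →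
      (1 - δ) * l2norm z ^ 2 ≤ l2norm (A.mulVec z) ^ 2 ∧
      l2norm (A.mulVec z) ^ 2 ≤ (1 + δ) * l2norm z ^ 2) :
    (m : ℝ) ≥
      (k : ℝ) * Real.log ((n : ℝ) / k) /
        (2 * Real.log (Real.sqrt (16 * (1 + δ) / (1 - δ)) + 1)) := by
  classical
  obtain ⟨hδ0, hδ1⟩ := hδ
  have hd1 : 0 < 1 - δ := by linarith
  have hm := two_k_le n k m hkn A (1 - δ) hd1 fun z hz => (hRIP z hz).1
  -- block length
  obtain ⟨q, hq⟩ : ∃ q, q = n / k := ⟨_, rfl⟩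
  have hq2 : 2 ≤ q := by rw [hq, Nat.le_div_iff_mul_le hk]; exact hkn
  have hkq : k * q ≤ n := by rw [hq]; exact Nat.mul_div_le n k
  have hnq : n < k * (q + 1) := by rw [hq]; exact Nat.lt_mul_div_succ n hk
  let e : Fin k × Fin q → Fin n := fun p => Fin.castLE hkq (finProdFinEquiv p)
  have he : Function.Injective e := (Fin.castLE_injective hkq).comp finProdFinEquiv.injective
  obtain ⟨C, hsep, hcard⟩ := gilbert k q ((k - 1) / 2) (by omega)
  have hk0 : (0 : ℝ) < k := by exact_mod_cast hk
  -- packing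
  have hsuppf : ∀ f : Fin k → Fin q, Set.ncard {j | wordVec e f j ≠ 0} ≤ 2 * k := by
    intro f
    have hs : {j | wordVec e f j ≠ 0} ⊆ ((univ.image fun i => e (i, f i) : Finset (Fin n)) : Set (Fin n)) :=
      fun j hj => wordVec_supp e he f j hj
    refine (Set.ncard_le_ncard hs (Set.toFinite _)).trans ?_
    rw [Set.ncard_coe_finset]
    refine card_image_le.trans ?_
    simp; omega
  have hsuppfg : ∀ f g : Fin k → Fin q,
      Set.ncard {j | (wordVec e f - wordVec e g) j ≠ 0} ≤ 2 * k := by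
    intro f g
    have hs : {j | (wordVec e f - wordVec e g) j ≠ 0} ⊆
        (((univ.image fun i => e (i, f i)) ∪ (univ.image fun i => e (i, g i)) : Finset (Fin n)) : Set (Fin n)) := by
      intro j hj
      rw [Finset.mem_coe, mem_union]
      by_contra hno
      rw [not_or] at hno
      have h1 : wordVec e f j = 0 := by
        by_contra h; exact hno.1 (wordVec_supp e he f j h)
      have h2 : wordVec e g j = 0 := by
        by_contra h; exact hno.2 (wordVec_supp e he g j h)
      apply hj
      simp [h1, h2]
    refine (Set.ncard_le_ncard hs (Set.toFinite _)).trans ?_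
    rw [Set.ncard_coe_finset]
    refine (card_union_le _ _).trans ?_
    have h1 := card_image_le (s := (univ : Finset (Fin k))) (f := fun i => e (i, f i))
    have h2 := card_image_le (s := (univ : Finset (Fin k))) (f := fun i => e (i, g i))
    simp only [Finset.card_univ, Fintype.card_fin] at h1 h2
    omega
  have hpack := packing_bound C (fun f => WithLp.toLp 2 (A.mulVec (wordVec e f)))
    (Real.sqrt ((1 + δ) * k)) (Real.sqrt ((1 - δ) * k)) (Real.sqrt_nonneg _)
    (Real.sqrt_pos.2 (by positivity))
    (by
      intro f _
      rw [← l2norm_eq]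
      apply Real.le_sqrt_of_sq_le
      have := (hRIP _ (hsuppf f)).2
      rwa [wordVec_sq e he] at this)
    (by
      intro f hf g hg hfg
      rw [← WithLp.toLp_sub, ← Matrix.mulVec_sub, ← l2norm_eq]
      apply Real.sqrt_le_iff.2
      refine ⟨Real.sqrt_nonneg _, ?_⟩
      have h1 := (hRIP _ (hsuppfg f g)).1
      rw [wordVec_sub_sq e he] at h1
      refine le_trans ?_ h1
      have h2 := hsep f hf g hg hfg
      have h3 : k ≤ 2 * hammingDist f g := by omega
      have h4 : (k : ℝ) ≤ 2 * hammingDist f g := by exact_mod_cast h3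
      gcongr)
  rw [← Real.sqrt_div' _ (by positivity), mul_div_mul_right _ _ hk0.ne'] at hpack
  set s := Real.sqrt ((1 + δ) / (1 - δ)) with hs
  have hs1 : 1 ≤ s := by
    rw [hs, Real.one_le_sqrt, one_le_div hd1]; linarith
  have hR : Real.sqrt (16 * (1 + δ) / (1 - δ)) = 4 * s := by
    rw [mul_div_assoc, Real.sqrt_mul (by norm_num), ← hs]
    congr 1
    rw [show (16 : ℝ) = 4 ^ 2 by norm_num, Real.sqrt_sq (by norm_num)]
  rw [hR]
  have hq0 : (0 : ℝ) < q := by exact_mod_cast (by omega : 0 < q)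
  have hq1 : (1 : ℝ) ≤ q := by exact_mod_cast (by omega : 1 ≤ q)
  have hqk : (q : ℝ) ^ k ≤ 4 ^ k * (1 + 2 * s) ^ (2 * m) := by
    have h1 : (q : ℝ) ^ k ≤ C.card * (2 ^ k * q ^ ((k - 1) / 2)) := by exact_mod_cast hcard
    have h2 : (q : ℝ) ^ k ≤ (1 + 2 * s) ^ m * (2 ^ k * q ^ ((k - 1) / 2)) := by
      refine h1.trans ?_
      gcongr
    have h3 : (q : ℝ) ^ k * q ^ k ≤ (4 ^ k * (1 + 2 * s) ^ (2 * m)) * q ^ k :=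
      calc (q : ℝ) ^ k * q ^ k ≤ ((1 + 2 * s) ^ m * (2 ^ k * q ^ ((k - 1) / 2))) *
            ((1 + 2 * s) ^ m * (2 ^ k * q ^ ((k - 1) / 2))) := by gcongr
        _ = (4 ^ k * (1 + 2 * s) ^ (2 * m)) * q ^ (2 * ((k - 1) / 2)) := by
            rw [show (4 : ℝ) = 2 * 2 by norm_num, mul_pow, pow_mul', pow_mul']; ring
        _ ≤ _ := by
            gcongr
            · omega
    exact le_of_mul_le_mul_right h3 (by positivity)
  have hnk : (n : ℝ) / k ≤ 3 / 2 * q := by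
    rw [div_le_iff₀ hk0]
    have h1 : (n : ℝ) ≤ k * (q + 1) := by exact_mod_cast hnq.le
    have h2 : (2 : ℝ) ≤ q := by exact_mod_cast hq2
    nlinarith
  have hkey : ((n : ℝ) / k) ^ k ≤ (4 * s + 1) ^ (2 * m) := by
    calc ((n : ℝ) / k) ^ k ≤ (3 / 2 * q) ^ k := by gcongr
      _ = (3 / 2) ^ k * (q : ℝ) ^ k := mul_pow _ _ _
      _ ≤ (3 / 2) ^ k * (4 ^ k * (1 + 2 * s) ^ (2 * m)) := by gcongr
      _ = 6 ^ k * (1 + 2 * s) ^ (2 * m) := by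
          rw [← mul_assoc, ← mul_pow]; norm_num
      _ ≤ 6 ^ k * (3 / 5 * (4 * s + 1)) ^ (2 * m) := by
          gcongr
          linarith
      _ = 6 ^ k * (3 / 5) ^ (2 * m) * (4 * s + 1) ^ (2 * m) := by rw [mul_pow]; ring
      _ ≤ 6 ^ k * (3 / 5) ^ (4 * k) * (4 * s + 1) ^ (2 * m) := by
          gcongr ?_ * ?_ * ?_
          exact pow_le_pow_of_le_one (by norm_num) (by norm_num) (by omega)
      _ = (6 * (3 / 5) ^ 4) ^ k * (4 * s + 1) ^ (2 * m) := by rw [mul_pow, ← pow_mul]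
      _ ≤ 1 * (4 * s + 1) ^ (2 * m) := by
          gcongr
          exact pow_le_one₀ (by norm_num) (by norm_num)
      _ = _ := one_mul _
  have hlog := Real.log_le_log (by positivity) hkey
  rw [Real.log_pow, Real.log_pow] at hlog
  have hlp : 0 < Real.log (4 * s + 1) := Real.log_pos (by linarith)
  rw [ge_iff_le, div_le_iff₀ (by positivity)]
  push_cast at hlog
  linarith
end
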